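/- arXiv:0708.3928 — 4 statements merged into one kernel-verified Lean document; each statement's English description precedes it below -/
import Mathlib

section
/- Let A be an affine Poisson algebra and let M be a simple Poisson A-module. Then ann_A(M) is a prime ideal of A. -/
/-- A Poisson bracket on a commutative ℂ-algebra `A`: a ℂ-bilinear product making `A`
a Lie algebra and such that each Hamiltonian `ham a = br a ·` is a ℂ-derivation of `A`. -/
structure PoissonStruct (A : Type*) [CommRing A] [Algebra ℂ A] where
  br : A → A → A
  add_left : ∀ a b c : A, br (a + b) c = br a c + br b c
  smul_left : ∀ (r : ℂ) (a b : A), br (r • a) b = r • br a b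
  add_right : ∀ a b c : A, br a (b + c) = br a b + br a c
  smul_right : ∀ (r : ℂ) (a b : A), br a (r • b) = r • br a b
  antisymm : ∀ a b : A, br a b = - br b a
  jacobi : ∀ a b c : A, br a (br b c) = br (br a b) c + br b (br a c)
  leibniz : ∀ a b c : A, br a (b * c) = br a b * c + b * br a c

/-- An ideal `I` of a Poisson algebra is a Poisson ideal if `{a, i} ∈ I`
for all `a ∈ A` and `i ∈ I`. -/
def PoissonStruct.IsPoissonIdeal {A : Type*} [CommRing A] [Algebra ℂ A]
    (P : PoissonStruct A) (I : Ideal A) : Prop :=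
  ∀ a : A, ∀ i ∈ I, P.br a i ∈ I

/-- A Poisson module structure on an `A`-module `M`, in the sense of Farkas and Oh. -/
structure PoissonModuleStruct {A : Type*} [CommRing A] [Algebra ℂ A]
    (P : PoissonStruct A) (M : Type*) [AddCommGroup M] [Module ℂ M] [Module A M]
    [IsScalarTower ℂ A M] where
  pbr : A → M → M
  add_left : ∀ (a b : A) (m : M), pbr (a + b) m = pbr a m + pbr b m
  smul_left : ∀ (r : ℂ) (a : A) (m : M), pbr (r • a) m = r • pbr a m
  add_right : ∀ (a : A) (m n : M), pbr a (m + n) = pbr a m + pbr a n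
  smul_right : ∀ (r : ℂ) (a : A) (m : M), pbr a (r • m) = r • pbr a m
  lie_compat : ∀ (a b : A) (m : M), pbr (P.br a b) m = pbr a (pbr b m) - pbr b (pbr a m)
  deriv_act : ∀ (a b : A) (m : M), pbr a (b • m) = P.br a b • m + b • pbr a m
  mul_act : ∀ (a b : A) (m : M), pbr (a * b) m = a • pbr b m + b • pbr a m

namespace PoissonModuleStruct

variable {A : Type*} [CommRing A] [Algebra ℂ A] {P : PoissonStruct A}
  {M : Type*} [AddCommGroup M] [Module ℂ M] [Module A M] [IsScalarTower ℂ A M]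

/-- A Poisson submodule of a Poisson module. -/
def IsPoissonSubmodule (Q : PoissonModuleStruct P M) (N : Submodule A M) : Prop :=
  ∀ a : A, ∀ n ∈ N, Q.pbr a n ∈ N

/-- A simple Poisson module: nonzero, and its only Poisson submodules are `⊥` and `⊤`. -/
def IsSimple (Q : PoissonModuleStruct P M) : Prop :=
  (∃ m : M, m ≠ 0) ∧ ∀ N : Submodule A M, Q.IsPoissonSubmodule N → N = ⊥ ∨ N = ⊤

end PoissonModuleStruct

namespace PoissonStruct

variable {A : Type*} [CommRing A] [Algebra ℂ A] (P : PoissonStruct A)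

/-- The Hamiltonian derivation `{a, -}`. -/
def ham (a : A) : Derivation ℂ A A :=
  Derivation.mk'
    { toFun := P.br a
      map_add' := P.add_right a
      map_smul' := fun r b => P.smul_right r a b }
    fun b c => by
      simp only [LinearMap.coe_mk, AddHom.coe_mk, P.leibniz, smul_eq_mul]
      ring

@[simp]
theorem ham_apply (a b : A) : P.ham a b = P.br a b := rfl

variable {P}

theorem IsPoissonIdeal.pow_mem_of_mul_mem {J : Ideal A} (hJ : P.IsPoissonIdeal J) (c x : A) :
    ∀ m q : ℕ, x ^ m * P.br c x ^ q ∈ J → P.br c x ^ (q + 2 * m) ∈ J := by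
  intro m
  induction m with
  | zero => intro q h; simpa using h
  | succ m ih =>
    intro q h
    have hq : (q : A) * P.br c x * P.br c x ^ (q - 1) = q * P.br c x ^ q := by
      cases q with
      | zero => simp
      | succ q => rw [Nat.add_sub_cancel, pow_succ]; ring
    have hD : P.br c x * P.ham c (x ^ (m + 1) * P.br c x ^ q) ∈ J :=
      J.mul_mem_left _ (hJ c _ h)
    have hE : P.br c x * P.ham c (x ^ (m + 1) * P.br c x ^ q) =
        ((m + 1 : ℕ) : ℂ) • (x ^ m * P.br c x ^ (q + 2)) +
          q * P.br c (P.br c x) * (x ^ (m + 1) * P.br c x ^ q) := by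
      simp only [Derivation.leibniz, Derivation.leibniz_pow, ham_apply, smul_eq_mul,
        Nat.add_sub_cancel, nsmul_eq_mul, Nat.cast_smul_eq_nsmul]
      linear_combination x ^ (m + 1) * P.br c (P.br c x) * hq
    rw [hE, Ideal.add_mem_iff_left _ (J.mul_mem_left _ h)] at hD
    have hS := Submodule.smul_of_tower_mem J (((m + 1 : ℕ) : ℂ)⁻¹) hD
    rw [inv_smul_smul₀ (Nat.cast_ne_zero.mpr m.succ_ne_zero)] at hS
    have := ih (q + 2) hS
    rwa [show q + 2 + 2 * m = q + 2 * (m + 1) by ring] at this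

theorem IsPoissonIdeal.radical {J : Ideal A} (hJ : P.IsPoissonIdeal J) :
    P.IsPoissonIdeal J.radical := by
  rintro c x ⟨n, hn⟩
  exact ⟨0 + 2 * n, hJ.pow_mem_of_mul_mem c x n 0 (by simpa using hn)⟩

/-- The ideal quotient of a radical Poisson ideal by any element is a Poisson ideal. -/
theorem IsPoissonIdeal.colon_singleton {J : Ideal A} (hJ : P.IsPoissonIdeal J)
    (hrad : J.IsRadical) (b : A) : P.IsPoissonIdeal (J.colon {b}) := by
  intro c a ha
  rw [Submodule.mem_colon_singleton, smul_eq_mul] at ha ⊢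
  refine hrad ⟨2, ?_⟩
  have h := J.sub_mem (J.mul_mem_left (P.br c a * b) (hJ c _ ha))
    (J.mul_mem_left (P.br c a * P.br c b) ha)
  rw [P.leibniz] at h
  convert h using 1
  ring

end PoissonStruct

namespace PoissonModuleStruct

variable {A : Type*} [CommRing A] [Algebra ℂ A] {P : PoissonStruct A}
  {M : Type*} [AddCommGroup M] [Module ℂ M] [Module A M] [IsScalarTower ℂ A M]

theorem pbr_zero (Q : PoissonModuleStruct P M) (a : A) : Q.pbr a 0 = 0 := by
  simpa using Q.smul_right 0 a 0

theorem isPoissonIdeal_annihilator (Q : PoissonModuleStruct P M) :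
    P.IsPoissonIdeal (Module.annihilator A M) := by
  intro a j hj
  rw [Module.mem_annihilator] at hj ⊢
  intro m
  simpa [hj, Q.pbr_zero] using (Q.deriv_act a j m).symm

theorem isPoissonSubmodule_smul_top (Q : PoissonModuleStruct P M) {I : Ideal A}
    (hI : P.IsPoissonIdeal I) : Q.IsPoissonSubmodule (I • ⊤) := by
  intro a n hn
  induction hn using Submodule.smul_induction_on' with
  | smul i hi m hm =>
    rw [Q.deriv_act]
    exact add_mem (Submodule.smul_mem_smul (hI a i hi) trivial)
      (Submodule.smul_mem_smul hi trivial)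
  | add x hx y hy ihx ihy =>
    rw [Q.add_right]
    exact add_mem ihx ihy

theorem IsSimple.le_annihilator_or_smul_top {Q : PoissonModuleStruct P M} (hQ : Q.IsSimple)
    {I : Ideal A} (hI : P.IsPoissonIdeal I) :
    I ≤ Module.annihilator A M ∨ I • (⊤ : Submodule A M) = ⊤ := by
  refine (hQ.2 _ (Q.isPoissonSubmodule_smul_top hI)).imp_left fun h i hi => ?_
  rw [Module.mem_annihilator]
  intro m
  rw [← Submodule.mem_bot A, ← h]
  exact Submodule.smul_mem_smul hi trivial

theorem IsSimple.annihilator_ne_top {Q : PoissonModuleStruct P M} (hQ : Q.IsSimple) :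
    Module.annihilator A M ≠ ⊤ := by
  obtain ⟨m, hm⟩ := hQ.1
  rw [Ideal.ne_top_iff_one, Module.mem_annihilator]
  exact fun h => hm (by simpa using h m)

theorem IsSimple.isRadical_annihilator [IsNoetherianRing A] {Q : PoissonModuleStruct P M}
    (hQ : Q.IsSimple) : (Module.annihilator A M).IsRadical := by
  refine (hQ.le_annihilator_or_smul_top Q.isPoissonIdeal_annihilator.radical).resolve_right
    fun htop => ?_
  obtain ⟨n, hn⟩ := (Module.annihilator A M).exists_radical_pow_le_of_fg
    (IsNoetherian.noetherian _)
  have hpow : (Module.annihilator A M).radical ^ n • (⊤ : Submodule A M) = ⊤ := by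
    clear hn
    induction n with
    | zero => simp
    | succ n ih => rw [pow_succ, Submodule.mul_smul, htop, ih]
  obtain ⟨m, hm⟩ := hQ.1
  have hle : (⊤ : Submodule A M) ≤ ⊥ := by
    rw [← hpow, Submodule.smul_le]
    intro r hr x _
    exact Module.mem_annihilator.mp (hn hr) x
  exact hm (hle trivial)

end PoissonModuleStruct

/-- Let `A` be an affine Poisson algebra and `M` a simple Poisson
`A`-module. Then `ann_A(M)` is a prime ideal of `A`. -/
theorem stmt1 {A : Type*} [CommRing A] [Algebra ℂ A] [Algebra.FiniteType ℂ A]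
    (P : PoissonStruct A)
    {M : Type*} [AddCommGroup M] [Module ℂ M] [Module A M] [IsScalarTower ℂ A M]
    (Q : PoissonModuleStruct P M) (hsimple : Q.IsSimple) :
    (Module.annihilator A M).IsPrime := by
  have : IsNoetherianRing A := Algebra.FiniteType.isNoetherianRing ℂ A
  refine ⟨hsimple.annihilator_ne_top, fun {a b} hab => ?_⟩
  have hcolon := Q.isPoissonIdeal_annihilator.colon_singleton hsimple.isRadical_annihilator b
  refine (hsimple.le_annihilator_or_smul_top hcolon).imp
    (fun h => h (by rwa [Submodule.mem_colon_singleton, smul_eq_mul])) fun h => ?_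
  have hle : (⊤ : Submodule A M) ≤ LinearMap.ker (LinearMap.lsmul A M b) := by
    rw [← h, Submodule.smul_le]
    intro r hr m _
    rw [Submodule.mem_colon_singleton, smul_eq_mul, Module.mem_annihilator] at hr
    rw [LinearMap.mem_ker, LinearMap.lsmul_apply, smul_smul, mul_comm]
    exact hr m
  exact Module.mem_annihilator.mpr fun m => hle (x := m) trivial
end

section
/- Let U be the ℂ-algebra generated by x, y, z and a central generator t subject to the relations xy = yx + 2tz + (1/2)t², yz = zy − ty, zx = xz − tx. Then the element g := z² − (1/2)tz − yx is central in U. Moreover, in the quotient U₁ := U/(t−1)U, the element p := z² − (1/2)z − yx is central. -/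
noncomputable section

/-- Generators of the free algebra on `x, y, z, t` (indices `0, 1, 2, 3`). -/
def F4 (i : Fin 4) : FreeAlgebra ℂ (Fin 4) := FreeAlgebra.ι ℂ i

/-- The defining relations of `U`: `t` is central and
`xy = yx + 2tz + (1/2)t²`, `yz = zy − ty`, `zx = xz − tx`. -/
inductive URel : FreeAlgebra ℂ (Fin 4) → FreeAlgebra ℂ (Fin 4) → Prop
  | central_x : URel (F4 3 * F4 0) (F4 0 * F4 3)
  | central_y : URel (F4 3 * F4 1) (F4 1 * F4 3)
  | central_z : URel (F4 3 * F4 2) (F4 2 * F4 3)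
  | rel_xy : URel (F4 0 * F4 1)
      (F4 1 * F4 0 + 2 * (F4 3 * F4 2) + (1/2 : ℂ) • (F4 3 * F4 3))
  | rel_yz : URel (F4 1 * F4 2) (F4 2 * F4 1 - F4 3 * F4 1)
  | rel_zx : URel (F4 2 * F4 0) (F4 0 * F4 2 - F4 3 * F4 0)

/-- The algebra `U`. -/
abbrev U : Type := RingQuot URel

def Ux : U := RingQuot.mkAlgHom ℂ URel (F4 0)
def Uy : U := RingQuot.mkAlgHom ℂ URel (F4 1)
def Uz : U := RingQuot.mkAlgHom ℂ URel (F4 2)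
def Ut : U := RingQuot.mkAlgHom ℂ URel (F4 3)

/-- The element `g = z² − (1/2)tz − yx` of `U`. -/
def Ug : U := Uz * Uz - (1/2 : ℂ) • (Ut * Uz) - Uy * Ux

/-- The relation `t = 1` defining `U₁ = U/(t−1)U`. -/
inductive U1Rel : U → U → Prop
  | t_eq_one : U1Rel Ut 1

/-- The deformation `U₁ = U/(t−1)U`. -/
abbrev U1 : Type := RingQuot U1Rel

/-- The canonical projection `U → U₁`. -/
def Upi : U →ₐ[ℂ] U1 := RingQuot.mkAlgHom ℂ U1Rel

/-- The element `p = z² − (1/2)z − yx` of `U₁`. -/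
def U1p : U1 := Upi Uz * Upi Uz - (1/2 : ℂ) • Upi Uz - Upi Uy * Upi Ux

/-- In a ring, let `h` commute with `x, y, z` and put `t = 2h`. The relations
`xy = yx + 2tz + ht`, `xz = zx + tx`, `zy = yz + ty` imply that `z² - hz - yx` commutes with
`x`, `y` and `z`. -/
theorem casimir_commute {R : Type*} [Ring R] {x y z h : R}
    (hx : x * h = h * x) (hy : y * h = h * y) (hz : z * h = h * z)
    (hxy : x * y = y * x + 4 * (h * z) + 2 * (h * h))
    (hxz : x * z = z * x + 2 * (h * x)) (hzy : z * y = y * z + 2 * (h * y)) :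
    Commute (z * z - h * z - y * x) x ∧ Commute (z * z - h * z - y * x) y ∧
      Commute (z * z - h * z - y * x) z := by
  have assoc_rule {a b c : R} (e : a * b = c) (w : R) : a * (b * w) = c * w := by
    rw [← mul_assoc, e]
  have two_eq (a : R) : 2 * a = a + a := two_mul a
  have four_eq (a : R) : 4 * a = a + a + (a + a) := by noncomm_ring
  simp only [two_eq, four_eq] at hxy hxz hzy
  refine ⟨?_, ?_, ?_⟩ <;>
    simp only [Commute, SemiconjBy, mul_sub, sub_mul, mul_add, add_mul, mul_assoc,
      hy, hxy, hxz, hzy, assoc_rule hx, assoc_rule hy, assoc_rule hz,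
      assoc_rule hxy, assoc_rule hxz, assoc_rule hzy] <;>
    abel

theorem Ut_mul_Ux : Ut * Ux = Ux * Ut := by
  simpa [Ux, Ut] using RingQuot.mkAlgHom_rel ℂ URel.central_x

theorem Ut_mul_Uy : Ut * Uy = Uy * Ut := by
  simpa [Uy, Ut] using RingQuot.mkAlgHom_rel ℂ URel.central_y

theorem Ut_mul_Uz : Ut * Uz = Uz * Ut := by
  simpa [Uz, Ut] using RingQuot.mkAlgHom_rel ℂ URel.central_z

theorem Ux_mul_Uy : Ux * Uy = Uy * Ux + 2 * (Ut * Uz) + (1/2 : ℂ) • (Ut * Ut) := by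
  simpa only [Ux, Uy, Uz, Ut, map_add, map_mul, map_smul, map_ofNat] using
    RingQuot.mkAlgHom_rel ℂ URel.rel_xy

theorem Uy_mul_Uz : Uy * Uz = Uz * Uy - Ut * Uy := by
  simpa only [Ux, Uy, Uz, Ut, map_sub, map_mul] using RingQuot.mkAlgHom_rel ℂ URel.rel_yz

theorem Uz_mul_Ux : Uz * Ux = Ux * Uz - Ut * Ux := by
  simpa only [Ux, Uy, Uz, Ut, map_sub, map_mul] using RingQuot.mkAlgHom_rel ℂ URel.rel_zx

theorem Ug_commute_generators : Commute Ug Ux ∧ Commute Ug Uy ∧ Commute Ug Uz := by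
  have ht : Ut = 2 * ((1/2 : ℂ) • Ut) := by
    rw [two_mul, ← add_smul]; norm_num
  have key := casimir_commute (x := Ux) (y := Uy) (z := Uz) (h := (1/2 : ℂ) • Ut)
    (by rw [mul_smul_comm, smul_mul_assoc, Ut_mul_Ux])
    (by rw [mul_smul_comm, smul_mul_assoc, Ut_mul_Uy])
    (by rw [mul_smul_comm, smul_mul_assoc, Ut_mul_Uz])
    (by
      rw [Ux_mul_Uy]
      simp only [mul_smul_comm, smul_mul_assoc, smul_smul, ← map_ofNat (algebraMap ℂ U),
        ← Algebra.smul_def]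
      norm_num)
    (by rw [← mul_assoc, ← ht, Uz_mul_Ux, sub_add_cancel])
    (by rw [← mul_assoc, ← ht, Uy_mul_Uz, sub_add_cancel])
  simpa only [Ug, smul_mul_assoc] using key

theorem Ug_commute_Ut : Commute Ug Ut := by
  have hx : Commute Ux Ut := Ut_mul_Ux.symm
  have hy : Commute Uy Ut := Ut_mul_Uy.symm
  have hz : Commute Uz Ut := Ut_mul_Uz.symm
  exact ((hz.mul_left hz).sub_left (((Commute.refl Ut).mul_left hz).smul_left _)).sub_left
    (hy.mul_left hx)

theorem Ug_commute (u : U) : Commute Ug u := by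
  obtain ⟨a, rfl⟩ := RingQuot.mkAlgHom_surjective ℂ URel u
  obtain ⟨hx, hy, hz⟩ := Ug_commute_generators
  induction a using FreeAlgebra.induction with
  | grade0 r =>
    rw [AlgHom.commutes]
    exact Algebra.commute_algebraMap_right r Ug
  | grade1 i =>
    fin_cases i
    exacts [hx, hy, hz, Ug_commute_Ut]
  | mul a b ha hb =>
    rw [map_mul]
    exact ha.mul_right hb
  | add a b ha hb =>
    rw [map_add]
    exact ha.add_right hb

theorem Upi_Ug : Upi Ug = U1p := by
  have ht : Upi Ut = 1 := by
    simpa only [Upi, map_one] using RingQuot.mkAlgHom_rel ℂ U1Rel.t_eq_one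
  simp only [Ug, U1p, map_sub, map_mul, map_smul, ht, one_mul]

/-- In the quantization `U`, the element `g = z² − (1/2)tz − yx`
is central; and in the deformation `U₁ = U/(t−1)U`, the element
`p = z² − (1/2)z − yx` is central. -/
theorem stmt8 : (∀ u : U, Ug * u = u * Ug) ∧ (∀ u : U1, U1p * u = u * U1p) := by
  refine ⟨Ug_commute, fun u => ?_⟩
  obtain ⟨v, rfl⟩ := RingQuot.mkAlgHom_surjective ℂ U1Rel u
  rw [← Upi_Ug]
  exact (Ug_commute v).map Upi

end
end

section
/- For σ ∈ ℂ, let T_{σ,1} be the ℂ-algebra generated by x, y, z subject to the relations xy = yx + 2z + 1/2, yz = zy − y, zx = xz − x and yx = z² − (1/2)z − σ. Then T_{σ,1} is a simple ring if and only if σ ≠ (4d² − 1)/16 for every integer d ≥ 1. -/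
noncomputable section

/-- Generators of the free algebra on `x, y, z` (indices `0, 1, 2`). -/
def F3 (i : Fin 3) : FreeAlgebra ℂ (Fin 3) := FreeAlgebra.ι ℂ i

/-- Simplicity of the representation of a ℂ-algebra `R` on `ℂ^d` given by an algebra
homomorphism `ρ : R → End ℂ (ℂ^d)`: the corresponding `R`-module is nonzero and has no
nontrivial submodules. -/
def SimpleRep (R : Type*) [Ring R] [Algebra ℂ R] (d : ℕ)
    (ρ : R →ₐ[ℂ] Module.End ℂ (Fin d → ℂ)) : Prop :=
  (∃ v : Fin d → ℂ, v ≠ 0) ∧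
    ∀ V : Submodule ℂ (Fin d → ℂ), (∀ a : R, ∀ v ∈ V, ρ a v ∈ V) → V = ⊥ ∨ V = ⊤

/-- The defining relations of `T_{σ,1}`:
`xy = yx + 2z + 1/2`, `yz = zy − y`, `zx = xz − x`, `yx = z² − (1/2)z − σ`. -/
inductive TRel (s : ℂ) : FreeAlgebra ℂ (Fin 3) → FreeAlgebra ℂ (Fin 3) → Prop
  | rel_xy : TRel s (F3 0 * F3 1) (F3 1 * F3 0 + 2 * F3 2 + (1/2 : ℂ) • 1)
  | rel_yz : TRel s (F3 1 * F3 2) (F3 2 * F3 1 - F3 1)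
  | rel_zx : TRel s (F3 2 * F3 0) (F3 0 * F3 2 - F3 0)
  | rel_yx : TRel s (F3 1 * F3 0) (F3 2 * F3 2 - (1/2 : ℂ) • F3 2 - s • 1)

/-- The algebra `T_{σ,1}`. -/
abbrev TAlg (s : ℂ) : Type := RingQuot (TRel s)

namespace TAlg

open Polynomial

variable {s : ℂ}

/-- The image in `T_{σ,1}` of the `i`-th generator. -/
def gen (s : ℂ) (i : Fin 3) : TAlg s := RingQuot.mkAlgHom ℂ (TRel s) (F3 i)

/-- The polynomial `z² - z/2 - σ`, whose value at `z` is `yx`. -/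
def quad (s : ℂ) : ℂ[X] := X ^ 2 - C (1 / 2) * X - C s

/-- Evaluation of polynomials at the generator `z`. -/
def evZ (s : ℂ) : ℂ[X] →ₐ[ℂ] TAlg s := aeval (gen s 2)

lemma eval_quad (t : ℂ) : (quad s).eval t = t ^ 2 - 1 / 2 * t - s := by
  simp [quad]

lemma quad_ne_zero : quad s ≠ 0 := by
  intro h
  have h0 := congrArg (eval 0) h
  have h1 := congrArg (eval 1) h
  have h2 := congrArg (eval (-1)) h
  simp only [eval_quad, eval_zero] at h0 h1 h2
  have : (2 : ℂ) = 0 := by linear_combination h1 + h2 - 2 * h0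
  norm_num at this

lemma taylor_one_quad : taylor 1 (quad s) = quad s + 2 * X + C (1 / 2) := by
  apply Polynomial.funext
  intro t
  simp only [taylor_eval, eval_quad, eval_add, eval_mul, eval_X, eval_C, eval_ofNat]
  ring

lemma y_mul_x : gen s 1 * gen s 0 = evZ s (quad s) := by
  have h := RingQuot.mkAlgHom_rel ℂ (TRel.rel_yx (s := s))
  simp only [map_mul, map_sub, map_smul, map_one] at h
  simp only [gen, h, evZ, quad, map_sub, map_mul, aeval_X, aeval_C,
    Algebra.algebraMap_eq_smul_one, smul_mul_assoc, one_mul, pow_two]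

lemma x_mul_y : gen s 0 * gen s 1 = evZ s (taylor 1 (quad s)) := by
  have h := RingQuot.mkAlgHom_rel ℂ (TRel.rel_xy (s := s))
  simp only [map_mul, map_add, map_smul, map_one, map_ofNat] at h
  rw [taylor_one_quad, map_add, map_add, ← y_mul_x]
  simp only [gen, h, evZ, map_mul, map_ofNat, aeval_X, aeval_C,
    Algebra.algebraMap_eq_smul_one]

lemma x_mul_z : gen s 0 * gen s 2 = (gen s 2 + 1) * gen s 0 := by
  have h := RingQuot.mkAlgHom_rel ℂ (TRel.rel_zx (s := s))
  simp only [map_mul, map_sub] at h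
  simp only [gen, add_mul, h, one_mul, sub_add_cancel]

lemma y_mul_z : gen s 1 * gen s 2 = (gen s 2 - 1) * gen s 1 := by
  have h := RingQuot.mkAlgHom_rel ℂ (TRel.rel_yz (s := s))
  simp only [map_mul, map_sub] at h
  simp only [gen, sub_mul, h, one_mul]

/-- An element that shifts `z` by `r` shifts every polynomial in `z` by `r`. -/
lemma mul_evZ {u : TAlg s} {r : ℂ}
    (hu : u * gen s 2 = (gen s 2 + algebraMap ℂ _ r) * u) (p : ℂ[X]) :
    u * evZ s p = evZ s (taylor r p) * u := by
  induction p using Polynomial.induction_on' with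
  | add p q hp hq => simp only [map_add, mul_add, add_mul, hp, hq]
  | monomial n a =>
    rw [← C_mul_X_pow_eq_monomial, taylor_mul, taylor_C, taylor_X_pow]
    simp only [evZ, map_mul, map_pow, map_add, aeval_X, aeval_C]
    rw [← mul_assoc, ← Algebra.commutes, mul_assoc, mul_assoc]
    congr 1
    exact (show SemiconjBy u (gen s 2) _ from hu).pow_right n

lemma x_mul_evZ (p : ℂ[X]) : gen s 0 * evZ s p = evZ s (taylor 1 p) * gen s 0 :=
  mul_evZ (by rw [map_one, x_mul_z]) p

lemma y_mul_evZ (p : ℂ[X]) : gen s 1 * evZ s p = evZ s (taylor (-1) p) * gen s 1 :=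
  mul_evZ (by rw [map_neg, map_one, y_mul_z, sub_eq_add_neg]) p

/-- The monomial of weight `n`: a power of `x` for `n ≥ 0` and of `y` for `n < 0`. -/
def mono (s : ℂ) : ℤ → TAlg s
  | .ofNat n => gen s 0 ^ n
  | .negSucc n => gen s 1 ^ (n + 1)

lemma mono_mul_z (n : ℤ) :
    mono s n * gen s 2 = (gen s 2 + algebraMap ℂ _ (n : ℂ)) * mono s n := by
  have key : ∀ (u : TAlg s) (c : ℂ), u * gen s 2 = (gen s 2 + algebraMap ℂ _ c) * u →
      ∀ k : ℕ, u ^ k * gen s 2 = (gen s 2 + algebraMap ℂ _ (k * c)) * u ^ k := by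
    intro u c hu k
    induction k with
    | zero => simp
    | succ k ih =>
      rw [pow_succ', mul_assoc, ih, ← mul_assoc, mul_add, hu, ← Algebra.commutes, ← add_mul,
        mul_assoc, add_assoc, ← map_add]
      congr 4
      push_cast
      ring
  cases n with
  | ofNat n => simpa [mono] using key _ 1 (by rw [map_one, x_mul_z]) n
  | negSucc n =>
    have := key (gen s 1) (-1) (by rw [map_neg, map_one, y_mul_z, sub_eq_add_neg]) (n + 1)
    rw [mono, this, Int.cast_negSucc, mul_neg_one]

lemma exists_x_mul_mono (n : ℤ) : ∃ q, gen s 0 * mono s n = evZ s q * mono s (n + 1) := by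
  rcases n with n | n | n
  · exact ⟨1, by rw [map_one, one_mul, mono, ← pow_succ']; rfl⟩
  · exact ⟨taylor 1 (quad s), by
      rw [← x_mul_y, show Int.negSucc 0 + 1 = Int.ofNat 0 from rfl]; simp [mono]⟩
  · refine ⟨taylor 1 (quad s), ?_⟩
    rw [← x_mul_y, show Int.negSucc (n + 1) + 1 = Int.negSucc n from rfl, mono, mono,
      pow_succ' _ (n + 1), mul_assoc]

lemma exists_y_mul_mono (n : ℤ) : ∃ q, gen s 1 * mono s n = evZ s q * mono s (n - 1) := by
  rcases n with (_ | n) | n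
  · exact ⟨1, by rw [show Int.ofNat 0 - 1 = Int.negSucc 0 from rfl]; simp [mono]⟩
  · refine ⟨quad s, ?_⟩
    rw [← y_mul_x, show Int.ofNat (n + 1) - 1 = Int.ofNat n by simp, mono, mono, pow_succ',
      mul_assoc]
  · exact ⟨1, by rw [map_one, one_mul, mono, ← pow_succ']; rfl⟩

/-- Every monomial has a right multiple that is a nonzero polynomial in `z`. -/
lemma exists_mono_mul (n : ℤ) : ∃ (v : TAlg s) (q : ℂ[X]), q ≠ 0 ∧ mono s n * v = evZ s q := by
  have key : ∀ (u v : TAlg s) (r : ℂ) (c : ℂ[X]), c ≠ 0 → u * v = evZ s c →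
      (∀ p, u * evZ s p = evZ s (taylor r p) * u) →
      ∀ k : ℕ, ∃ q : ℂ[X], q ≠ 0 ∧ u ^ k * v ^ k = evZ s q := by
    intro u v r c hc huv hu k
    induction k with
    | zero => exact ⟨1, one_ne_zero, by simp⟩
    | succ k ih =>
      obtain ⟨q, hq, h⟩ := ih
      refine ⟨taylor r q * c, mul_ne_zero ?_ hc, ?_⟩
      · rwa [Ne, ← map_zero (taylor r), (taylor_injective r).eq_iff]
      · rw [pow_succ', pow_succ, mul_assoc, ← mul_assoc (u ^ k), h, ← mul_assoc, hu, mul_assoc,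
          huv, map_mul]
  have ht : taylor 1 (quad s) ≠ 0 := by
    rw [Ne, ← map_zero (taylor 1), (taylor_injective (1 : ℂ)).eq_iff]
    exact quad_ne_zero
  cases n with
  | ofNat n => exact ⟨_, key _ _ _ _ ht x_mul_y x_mul_evZ n⟩
  | negSucc n => exact ⟨_, key _ _ _ _ quad_ne_zero y_mul_x y_mul_evZ (n + 1)⟩

/-- Every element is a sum of polynomials in `z` times monomials of different weights. -/
lemma exists_eq_sum (a : TAlg s) :
    ∃ (F : Finset ℤ) (p : ℤ → ℂ[X]), a = ∑ n ∈ F, evZ s (p n) * mono s n := by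
  let L : (ℤ →₀ ℂ[X]) →ₗ[ℂ] TAlg s := Finsupp.lsum ℂ fun n =>
    (LinearMap.mulRight ℂ (mono s n)).comp (evZ s).toLinearMap
  have hL : ∀ n p, L (Finsupp.single n p) = evZ s p * mono s n := fun n p => by simp [L]
  have hgen : ∀ (u : TAlg s), (∀ n p, u * (evZ s p * mono s n) ∈ LinearMap.range L) →
      ∀ v ∈ LinearMap.range L, u * v ∈ LinearMap.range L := by
    rintro u hu _ ⟨f, rfl⟩
    induction f using Finsupp.induction_linear with
    | zero => simp
    | add f g hf hg => rw [map_add, mul_add]; exact add_mem hf hg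
    | single n p => rw [hL]; exact hu n p
  have hmul : ∀ b : FreeAlgebra ℂ (Fin 3), ∀ v ∈ LinearMap.range L,
      RingQuot.mkAlgHom ℂ (TRel s) b * v ∈ LinearMap.range L := by
    intro b
    induction b using FreeAlgebra.induction with
    | grade0 r =>
      intro v hv
      rw [AlgHom.commutes, ← Algebra.smul_def]
      exact Submodule.smul_mem _ _ hv
    | grade1 i =>
      refine hgen (gen s i) fun n p => ?_
      fin_cases i
      · obtain ⟨q, hq⟩ := exists_x_mul_mono (s := s) n
        refine ⟨Finsupp.single (n + 1) (taylor 1 p * q), ?_⟩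
        simp only [Fin.zero_eta]
        rw [hL, ← mul_assoc, x_mul_evZ, mul_assoc, hq, map_mul, mul_assoc]
      · obtain ⟨q, hq⟩ := exists_y_mul_mono (s := s) n
        refine ⟨Finsupp.single (n - 1) (taylor (-1) p * q), ?_⟩
        simp only [Fin.mk_one]
        rw [hL, ← mul_assoc, y_mul_evZ, mul_assoc, hq, map_mul, mul_assoc]
      · refine ⟨Finsupp.single n (X * p), ?_⟩
        rw [hL, map_mul, ← mul_assoc]
        simp [evZ]
    | mul b c hb hc => intro v hv; rw [map_mul, mul_assoc]; exact hb _ (hc _ hv)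
    | add b c hb hc => intro v hv; rw [map_add, add_mul]; exact add_mem (hb _ hv) (hc _ hv)
  obtain ⟨b, rfl⟩ := RingQuot.mkAlgHom_surjective ℂ (TRel s) a
  have h1 : (1 : TAlg s) ∈ LinearMap.range L :=
    ⟨Finsupp.single 0 1, by rw [hL, map_one, one_mul]; exact pow_zero _⟩
  obtain ⟨f, hf⟩ := hmul b 1 h1
  refine ⟨f.support, f, ?_⟩
  rw [← mul_one (RingQuot.mkAlgHom ℂ (TRel s) b), ← hf]
  simp [L, Finsupp.lsum_apply, Finsupp.sum]

/-- A two-sided ideal contains the weight components of its elements. -/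
lemma component_mem (I : TwoSidedIdeal (TAlg s)) (F : Finset ℤ) :
    ∀ p : ℤ → ℂ[X], ∑ n ∈ F, evZ s (p n) * mono s n ∈ I →
      ∀ n ∈ F, evZ s (p n) * mono s n ∈ I := by
  classical
  have comm : ∀ (p : ℂ[X]) (n : ℤ), evZ s p * mono s n * gen s 2 =
      gen s 2 * (evZ s p * mono s n) + algebraMap ℂ _ (n : ℂ) * (evZ s p * mono s n) := by
    intro p n
    have hz : evZ s p * gen s 2 = gen s 2 * evZ s p := by
      rw [show gen s 2 = evZ s X by simp [evZ], ← map_mul, ← map_mul, mul_comm]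
    rw [mul_assoc, mono_mul_z, add_mul, mul_add, ← mul_assoc, hz, ← mul_assoc (evZ s p),
      ← Algebra.commutes, mul_assoc, mul_assoc]
  induction F using Finset.induction_on with
  | empty => simp
  | insert m F hm ih =>
    intro p hp
    have hF : ∀ n ∈ F, evZ s (p n) * mono s n ∈ I := by
      have hsum : ∑ n ∈ F, evZ s (C ((n : ℂ) - m) * p n) * mono s n ∈ I := by
        have h := I.sub_mem (I.sub_mem (I.mul_mem_right _ (gen s 2) hp)
          (I.mul_mem_left (gen s 2) _ hp)) (I.mul_mem_left (algebraMap ℂ _ (m : ℂ)) _ hp)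
        convert h using 1
        rw [Finset.sum_mul, Finset.mul_sum, Finset.mul_sum, ← Finset.sum_sub_distrib,
          ← Finset.sum_sub_distrib, Finset.sum_insert hm, comm, add_sub_cancel_left, sub_self,
          zero_add]
        refine Finset.sum_congr rfl fun n _ => ?_
        rw [comm, add_sub_cancel_left, ← sub_mul, ← map_sub, map_mul, mul_assoc]
        simp [evZ]
      intro n hn
      have hnm : (n : ℂ) - m ≠ 0 := by
        rw [sub_ne_zero, Ne, Int.cast_inj]
        rintro rfl
        exact hm hn
      have h := I.mul_mem_left (evZ s (C ((n : ℂ) - m)⁻¹)) _ (ih _ hsum n hn)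
      rwa [← mul_assoc, ← map_mul, ← mul_assoc, ← C_mul, inv_mul_cancel₀ hnm, C_1, one_mul] at h
    intro n hn
    rcases Finset.mem_insert.1 hn with rfl | hn
    · rw [Finset.sum_insert hm] at hp
      simpa using I.sub_mem hp (sum_mem hF)
    · exact hF n hn

/-- A nonzero two-sided ideal contains a nonzero polynomial in `z`. -/
lemma exists_evZ_mem {I : TwoSidedIdeal (TAlg s)} (hI : I ≠ ⊥) :
    ∃ p : ℂ[X], p ≠ 0 ∧ evZ s p ∈ I := by
  have ⟨a, haI, ha⟩ : ∃ a ∈ I, a ≠ 0 := by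
    by_contra! h
    exact hI (le_bot_iff.1 fun a ha => h a ha)
  obtain ⟨F, p, rfl⟩ := exists_eq_sum a
  obtain ⟨n, hn, hne⟩ := Finset.exists_ne_zero_of_sum_ne_zero ha
  obtain ⟨v, q, hq, hv⟩ := exists_mono_mul (s := s) n
  refine ⟨p n * q, mul_ne_zero ?_ hq, ?_⟩
  · intro h
    simp [h] at hne
  · rw [map_mul, ← hv, ← mul_assoc]
    exact I.mul_mem_right _ _ (component_mem I F p haI n hn)

/-- In a finite set, repeatedly adding `c ≠ 0` must stop. -/
lemma exists_add_mul_notMem {Z : Set ℂ} (hZ : Z.Finite) {c : ℂ} (hc : c ≠ 0) (t : ℂ) :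
    ∃ k : ℕ, t + k * c ∉ Z := by
  by_contra! h
  refine Set.infinite_range_of_injective (f := fun k : ℕ => t + k * c) ?_
    (hZ.subset (Set.range_subset_iff.2 h))
  intro a b hab
  simpa [hc] using hab

/-- Starting from a point of a finite set and repeatedly adding `c ≠ 0`, the last point of the set
is reached after finitely many steps. -/
lemma exists_add_mul_mem {Z : Set ℂ} (hZ : Z.Finite) {c : ℂ} (hc : c ≠ 0) {t : ℂ} (ht : t ∈ Z) :
    ∃ k : ℕ, t + k * c ∈ Z ∧ t + k * c + c ∉ Z := by
  by_contra! h
  obtain ⟨k, hk⟩ := exists_add_mul_notMem hZ hc t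
  refine hk ?_
  clear hk
  induction k with
  | zero => simpa using ht
  | succ k ih =>
    convert h k ih using 1
    push_cast
    ring

/-- A proper nonzero ideal gives two roots of `quad s` with positive integral difference. -/
lemma exists_roots {I : TwoSidedIdeal (TAlg s)} (hI : I ≠ ⊥) (hI' : I ≠ ⊤) :
    ∃ (t : ℂ) (d : ℕ), 1 ≤ d ∧ (quad s).eval t = 0 ∧ (quad s).eval (t + d) = 0 := by
  let J : Ideal ℂ[X] := (TwoSidedIdeal.asIdeal I).comap (evZ s)
  have hJ : ∀ p, p ∈ J ↔ evZ s p ∈ I := fun p => TwoSidedIdeal.mem_asIdeal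
  let Z : Set ℂ := {t | ∀ p ∈ J, p.eval t = 0}
  have hfin : Z.Finite := by
    obtain ⟨p, hp, hpI⟩ := exists_evZ_mem hI
    refine (p.roots.toFinset.finite_toSet).subset fun t ht => ?_
    simpa [hp] using ht p ((hJ p).2 hpI)
  have hne : Z.Nonempty := by
    let q := Submodule.IsPrincipal.generator J
    have hq : IsUnit q → False := fun h => hI' <| by
      have : (1 : ℂ[X]) ∈ J := by
        rw [← Ideal.eq_top_iff_one]
        exact Ideal.eq_top_of_isUnit_mem _ (Submodule.IsPrincipal.generator_mem J) h
      rw [hJ, map_one] at this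
      exact (TwoSidedIdeal.one_mem_iff I).1 this
    have hdeg : q.degree ≠ 0 := by
      intro h
      exact hq (isUnit_iff_degree_eq_zero.2 h)
    obtain ⟨t, ht⟩ := IsAlgClosed.exists_root q hdeg
    refine ⟨t, fun p hp => ?_⟩
    obtain ⟨r, rfl⟩ := (Submodule.IsPrincipal.mem_iff_generator_dvd J).1 hp
    rw [eval_mul, ht.eq_zero, zero_mul]
  have hup : ∀ t ∈ Z, t + 1 ∉ Z → (quad s).eval (t + 1) = 0 := by
    intro t ht ht'
    obtain ⟨p, hp, hpt⟩ : ∃ p ∈ J, p.eval (t + 1) ≠ 0 := by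
      simpa [Z] using ht'
    have h := ht (taylor 1 p * taylor 1 (quad s)) <| by
      rw [hJ, map_mul, ← x_mul_y, ← mul_assoc, ← x_mul_evZ]
      exact I.mul_mem_right _ _ (I.mul_mem_left _ _ ((hJ p).1 hp))
    rw [eval_mul, taylor_eval, taylor_eval] at h
    exact (mul_eq_zero.1 h).resolve_left hpt
  have hdown : ∀ t ∈ Z, t + -1 ∉ Z → (quad s).eval t = 0 := by
    intro t ht ht'
    obtain ⟨p, hp, hpt⟩ : ∃ p ∈ J, p.eval (t + -1) ≠ 0 := by
      simpa [Z] using ht'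
    have h := ht (taylor (-1) p * quad s) <| by
      rw [hJ, map_mul, ← y_mul_x, ← mul_assoc, ← y_mul_evZ]
      exact I.mul_mem_right _ _ (I.mul_mem_left _ _ ((hJ p).1 hp))
    rw [eval_mul, taylor_eval] at h
    exact (mul_eq_zero.1 h).resolve_left hpt
  obtain ⟨t, ht⟩ := hne
  obtain ⟨k, hk, hk'⟩ := exists_add_mul_mem hfin one_ne_zero ht
  obtain ⟨l, hl, hl'⟩ := exists_add_mul_mem hfin (neg_ne_zero.2 one_ne_zero) ht
  refine ⟨t + l * -1, l + k + 1, by omega, hdown _ hl hl', ?_⟩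
  convert hup _ hk hk' using 2
  push_cast
  ring

lemma eq_of_roots {t : ℂ} {d : ℕ} (hd : 1 ≤ d) (h : (quad s).eval t = 0)
    (h' : (quad s).eval (t + d) = 0) : s = (4 * (d : ℂ) ^ 2 - 1) / 16 := by
  rw [eval_quad] at h h'
  have hd0 : (d : ℂ) ≠ 0 := by exact_mod_cast (by omega : d ≠ 0)
  have ht : 2 * t + d - 1 / 2 = 0 :=
    mul_left_cancel₀ hd0 (by linear_combination h' - h)
  have ht' : t = 1 / 4 - d / 2 := by linear_combination ht / 2
  subst ht'
  linear_combination -h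

/-- The weight representation of `T_{σ,1}` on functions `ι → ℂ`: `z` acts by multiplication by `t`,
while `x` and `y` act as weighted shifts. -/
lemma exists_rep {ι : Type*} (e : Equiv.Perm ι) (a b t : ι → ℂ)
    (hba : ∀ i, b i * a (e.symm i) = (quad s).eval (t i))
    (hab : ∀ i, a i * b (e i) = (quad s).eval (t i + 1))
    (ha : ∀ i, a i * t (e i) = (t i + 1) * a i)
    (hb : ∀ i, b i * t (e.symm i) = (t i - 1) * b i) :
    ∃ φ : TAlg s →ₐ[ℂ] Module.End ℂ (ι → ℂ),
      ∀ (p : ℂ[X]) (f : ι → ℂ) (i : ι), φ (evZ s p) f i = p.eval (t i) * f i := by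
  let x : Module.End ℂ (ι → ℂ) :=
    (LinearMap.mulLeft ℂ a).comp (LinearMap.funLeft ℂ ℂ e)
  let y : Module.End ℂ (ι → ℂ) :=
    (LinearMap.mulLeft ℂ b).comp (LinearMap.funLeft ℂ ℂ e.symm)
  let z : Module.End ℂ (ι → ℂ) := LinearMap.mulLeft ℂ t
  have hx : ∀ f i, x f i = a i * f (e i) := fun f i => rfl
  have hy : ∀ f i, y f i = b i * f (e.symm i) := fun f i => rfl
  have hz : ∀ f i, z f i = t i * f i := fun f i => rfl
  let ψ : FreeAlgebra ℂ (Fin 3) →ₐ[ℂ] Module.End ℂ (ι → ℂ) := FreeAlgebra.lift ℂ ![x, y, z]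
  have h0 : ψ (F3 0) = x := by simp [ψ, F3]
  have h1 : ψ (F3 1) = y := by simp [ψ, F3]
  have h2 : ψ (F3 2) = z := by simp [ψ, F3]
  have hψ : ∀ ⦃u v⦄, TRel s u v → ψ u = ψ v := by
    intro u v huv
    have h2' : (2 : FreeAlgebra ℂ (Fin 3)) = (2 : ℂ) • 1 := by
      rw [← Algebra.algebraMap_eq_smul_one, map_ofNat]
    refine LinearMap.ext fun f => funext fun i => ?_
    have hab' := hab i
    have hba' := hba i
    rw [eval_quad] at hab' hba'
    cases huv <;>
    simp only [h2', map_mul, map_add, map_sub, map_smul, map_one, h0, h1, h2, Module.End.mul_apply,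
      LinearMap.add_apply, LinearMap.sub_apply, LinearMap.smul_apply, Module.End.one_apply,
      Pi.add_apply, Pi.sub_apply, Pi.smul_apply, smul_eq_mul, hx, hy, hz, smul_mul_assoc, one_mul,
      Equiv.symm_apply_apply, Equiv.apply_symm_apply]
    · linear_combination f i * hab' - f i * hba'
    · linear_combination f (e.symm i) * hb i
    · linear_combination -f (e i) * ha i
    · linear_combination f i * hba'
  let φ := RingQuot.liftAlgHom ℂ ⟨ψ, hψ⟩
  have hφ : φ (gen s 2) = z := by
    rw [gen, RingQuot.liftAlgHom_mkAlgHom_apply, h2]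
  refine ⟨φ, fun p f i => ?_⟩
  rw [evZ, ← aeval_algHom_apply, hφ]
  induction p using Polynomial.induction_on' generalizing f with
  | add p q hp hq => simp [add_mul, hp, hq]
  | monomial n c =>
    have hpow : ∀ n : ℕ, (z ^ n) f i = t i ^ n * f i := by
      intro n
      induction n with
      | zero => simp
      | succ n ih => rw [pow_succ', Module.End.mul_apply, hz, ih]; ring
    simp [aeval_monomial, Module.algebraMap_end_eq_smul_id, hpow, mul_assoc]

lemma evZ_injective : Function.Injective (evZ s) := by
  obtain ⟨φ, hφ⟩ := exists_rep (s := s) (Equiv.addRight (1 : ℂ)) (fun _ => 1)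
    (fun t => (quad s).eval t) id (by simp) (by simp) (by simp) (by simp [mul_comm, sub_eq_add_neg])
  rw [injective_iff_map_eq_zero]
  intro p hp
  apply Polynomial.funext
  intro t
  simpa [hp] using (hφ p 1 t).symm

instance : Nontrivial (TAlg s) := evZ_injective.nontrivial

lemma not_isSimpleRing (n : ℕ) (hs : s = (4 * ((n + 1 : ℕ) : ℂ) ^ 2 - 1) / 16) :
    ¬ IsSimpleRing (TAlg s) := by
  intro hsimple
  let t : Fin (n + 1) → ℂ := fun i => 1 / 4 - (n + 1) / 2 + (i : ℕ)
  have hlast : ∀ i : Fin (n + 1), i = Fin.last n ∨ ((i + 1 : Fin (n + 1)) : ℕ) = i + 1 := by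
    intro i
    rcases eq_or_ne i (Fin.last n) with h | h
    · exact .inl h
    · exact .inr (Fin.val_add_one_of_lt (Fin.lt_last_iff_ne_last.2 h))
  have hzero : ∀ i : Fin (n + 1), i = 0 ∨ ((i - 1 : Fin (n + 1)) : ℕ) + 1 = i := by
    intro i
    rcases hlast (i - 1) with h | h
    · left
      rw [sub_eq_iff_eq_add] at h
      simpa using h
    · right
      simpa using h.symm
  obtain ⟨φ, hφ⟩ := exists_rep (s := s) (Equiv.addRight (1 : Fin (n + 1)))
    (fun i => (i : ℕ) - n) (fun i => (i : ℕ)) t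
    (by
      intro i
      rw [eval_quad, hs]
      simp only [Equiv.addRight_symm, Equiv.coe_addRight, ← sub_eq_add_neg]
      rcases hzero i with rfl | h
      · simp [t]; ring
      · simp only [t, ← h]; push_cast; ring)
    (by
      intro i
      rw [eval_quad, hs]
      simp only [Equiv.coe_addRight]
      rcases hlast i with rfl | h
      · simp [t]; ring
      · simp only [t, h]; push_cast; ring)
    (by
      intro i
      simp only [Equiv.coe_addRight]
      rcases hlast i with rfl | h
      · simp
      · simp only [t, h]; push_cast; ring)
    (by
      intro i
      simp only [Equiv.addRight_symm, Equiv.coe_addRight, ← sub_eq_add_neg]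
      rcases hzero i with rfl | h
      · simp
      · simp only [t, ← h]; push_cast; ring)
  let q : ℂ[X] := ∏ i, (X - C (t i))
  have hq : q ≠ 0 := Finset.prod_ne_zero_iff.2 fun i _ => X_sub_C_ne_zero _
  have hker : φ (evZ s q) = 0 := by
    refine LinearMap.ext fun f => funext fun i => ?_
    rw [hφ, show q.eval (t i) = 0 by
      rw [eval_prod]
      exact Finset.prod_eq_zero (Finset.mem_univ i) (by simp)]
    simp
  have hinj : Function.Injective φ := RingHom.injective φ.toRingHom
  exact hq (evZ_injective (hinj (by rw [hker, map_zero, map_zero])))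

end TAlg

/-- `T_{σ,1}` is a simple ring if and only if
`σ ≠ (4d² − 1)/16` for every integer `d ≥ 1`. -/
theorem stmt10 (s : ℂ) :
    IsSimpleRing (TAlg s) ↔
      ∀ d : ℕ, 1 ≤ d → s ≠ (4 * (d : ℂ) ^ 2 - 1) / 16 := by
  constructor
  · rintro h (_ | n) hd rfl
    · omega
    · exact TAlg.not_isSimpleRing n rfl h
  · intro h
    refine IsSimpleRing.of_eq_bot_or_eq_top fun I => ?_
    by_contra! hI
    obtain ⟨t, d, hd, h1, h2⟩ := TAlg.exists_roots hI.1 hI.2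
    exact h d hd (TAlg.eq_of_roots hd h1 h2)

end
end

section
/- Let d ≥ 1 be an integer, let σ = (4d² − 1)/16, and let T_{σ,1} be the ℂ-algebra generated by x, y, z subject to the relations xy = yx + 2z + 1/2, yz = zy − y, zx = xz − x and yx = z² − (1/2)z − σ. Then T_{σ,1} has, up to isomorphism, a unique finite-dimensional simple left module M, and dim_ℂ M = d. -/
noncomputable section

/-- Linear operators `X, Y, Z` satisfying the defining relations of `T_{s,1}`. -/
structure TTriple (s : ℂ) {W : Type*} [AddCommGroup W] [Module ℂ W]
    (X Y Z : Module.End ℂ W) : Prop where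
  xy : ∀ w, X (Y w) = Y (X w) + (2 : ℂ) • Z w + (1/2 : ℂ) • w
  yz : ∀ w, Y (Z w) = Z (Y w) - Y w
  zx : ∀ w, Z (X w) = X (Z w) - X w
  yx : ∀ w, Y (X w) = Z (Z w) - (1/2 : ℂ) • Z w - s • w

/-- The class of the `i`-th generator in `T_{s,1}`. -/
def TAlg.gen_s11 (s : ℂ) (i : Fin 3) : TAlg s := RingQuot.mkAlgHom ℂ (TRel s) (F3 i)

theorem TAlg.induction {s : ℂ} {C : TAlg s → Prop} (scalar : ∀ r, C (algebraMap ℂ _ r))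
    (gen_s11 : ∀ i, C (TAlg.gen_s11 s i)) (mul : ∀ a b, C a → C b → C (a * b))
    (add : ∀ a b, C a → C b → C (a + b)) (a : TAlg s) : C a := by
  obtain ⟨f, rfl⟩ := RingQuot.mkAlgHom_surjective ℂ (TRel s) a
  induction f using FreeAlgebra.induction with
  | grade0 r => simpa using scalar r
  | grade1 i => exact gen_s11 i
  | mul a b ha hb => simpa using mul _ _ ha hb
  | add a b ha hb => simpa using add _ _ ha hb

theorem TTriple.of_algHom {s : ℂ} {W : Type*} [AddCommGroup W] [Module ℂ W]
    (ρ : TAlg s →ₐ[ℂ] Module.End ℂ W) :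
    TTriple s (ρ (TAlg.gen_s11 s 0)) (ρ (TAlg.gen_s11 s 1)) (ρ (TAlg.gen_s11 s 2)) := by
  have key {a b : FreeAlgebra ℂ (Fin 3)} (h : TRel s a b) (w : W) :
      ρ (RingQuot.mkAlgHom ℂ (TRel s) a) w = ρ (RingQuot.mkAlgHom ℂ (TRel s) b) w := by
    rw [RingQuot.mkAlgHom_rel ℂ h]
  constructor <;> intro w
  · simpa [TAlg.gen_s11, two_mul, two_smul] using key TRel.rel_xy w
  · simpa [TAlg.gen_s11] using key TRel.rel_yz w
  · simpa [TAlg.gen_s11] using key TRel.rel_zx w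
  · simpa [TAlg.gen_s11] using key TRel.rel_yx w

/-- The representation of `T_{s,1}` given by operators satisfying its relations. -/
def TTriple.toAlgHom {s : ℂ} {W : Type*} [AddCommGroup W] [Module ℂ W]
    {X Y Z : Module.End ℂ W} (h : TTriple s X Y Z) : TAlg s →ₐ[ℂ] Module.End ℂ W :=
  RingQuot.liftAlgHom ℂ ⟨FreeAlgebra.lift ℂ ![X, Y, Z], by
    intro a b hab
    induction hab <;> ext w
    · simpa [F3, two_mul, two_smul] using h.xy w
    · simpa [F3] using h.yz w
    · simpa [F3] using h.zx w
    · simpa [F3] using h.yx w⟩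

theorem TTriple.toAlgHom_gen {s : ℂ} {W : Type*} [AddCommGroup W] [Module ℂ W]
    {X Y Z : Module.End ℂ W} (h : TTriple s X Y Z) (i : Fin 3) :
    h.toAlgHom (TAlg.gen_s11 s i) = ![X, Y, Z] i := by
  simp [toAlgHom, TAlg.gen_s11, F3]

theorem TTriple.restrict {s : ℂ} {W : Type*} [AddCommGroup W] [Module ℂ W]
    {X Y Z : Module.End ℂ W} (h : TTriple s X Y Z) (V : Submodule ℂ W)
    (hX : ∀ v ∈ V, X v ∈ V) (hY : ∀ v ∈ V, Y v ∈ V) (hZ : ∀ v ∈ V, Z v ∈ V) :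
    TTriple s (X.restrict hX) (Y.restrict hY) (Z.restrict hZ) where
  xy w := Subtype.ext (h.xy w)
  yz w := Subtype.ext (h.yz w)
  zx w := Subtype.ext (h.zx w)
  yx w := Subtype.ext (h.yx w)

/-- In finite dimension, a sequence of eigenvectors whose eigenvalues form a nonconstant
arithmetic progression must vanish somewhere. -/
theorem exists_eq_zero_of_apply_eq_smul {W : Type*} [AddCommGroup W] [Module ℂ W]
    [FiniteDimensional ℂ W] {Z : Module.End ℂ W} {m c : ℂ} (hc : c ≠ 0) {u : ℕ → W}
    (hu : ∀ n, Z (u n) = (m + c * n) • u n) : ∃ n, u n = 0 := by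
  by_contra! hne
  have hli : LinearIndependent ℂ u :=
    Module.End.eigenvectors_linearIndependent' Z (fun n : ℕ => m + c * n)
      (fun a b hab => by simpa [hc] using hab) u
      (fun n => ⟨Module.End.mem_eigenspace_iff.2 (hu n), hne n⟩)
  exact not_finite_iff_infinite.2 inferInstance hli.finite

/-- A string of `d` vectors on which `X, Y, Z` act as on the standard basis of the simple
`T_{σ,1}`-module of dimension `d`. -/
structure IsTString (d : ℕ) {W : Type*} [AddCommGroup W] [Module ℂ W]
    (X Y Z : Module.End ℂ W) (b : ℕ → W) : Prop where
  z : ∀ n, Z (b n) = (1/4 - d/2 + n : ℂ) • b n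
  y : ∀ n, Y (b n) = b (n + 1)
  x_zero : X (b 0) = 0
  x_succ : ∀ n, X (b (n + 1)) = ((n + 1) * (n + 1 - d) : ℂ) • b n
  top : b d = 0
  linearIndependent : LinearIndependent ℂ (fun i : Fin d => b i)

theorem TTriple.exists_isTString {d : ℕ} {s : ℂ} (hs : s = (4 * (d : ℂ) ^ 2 - 1) / 16)
    {W : Type*} [AddCommGroup W] [Module ℂ W] [FiniteDimensional ℂ W] [Nontrivial W]
    {X Y Z : Module.End ℂ W} (h : TTriple s X Y Z) : ∃ b, IsTString d X Y Z b := by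
  obtain ⟨m, hm⟩ := Module.End.exists_eigenvalue Z
  obtain ⟨w, hw⟩ := hm.exists_hasEigenvector
  have hXZ (n : ℕ) : Z ((X ^ n) w) = (m + (-1) * n) • (X ^ n) w := by
    induction n with
    | zero => simpa using hw.apply_eq_smul
    | succ n ih =>
      rw [pow_succ', Module.End.mul_apply, h.zx, ih, map_smul]
      push_cast
      module
  have hX := exists_eq_zero_of_apply_eq_smul (neg_ne_zero.2 one_ne_zero) hXZ
  obtain ⟨v, l, hv, hvz, hvx⟩ : ∃ v l, v ≠ 0 ∧ Z v = l • v ∧ X v = 0 := by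
    classical
    obtain ⟨k, hk⟩ : ∃ k, Nat.find hX = k + 1 :=
      Nat.exists_eq_succ_of_ne_zero fun h0 => hw.2 (by simpa [h0] using Nat.find_spec hX)
    refine ⟨(X ^ k) w, _, Nat.find_min hX (by omega), hXZ k, ?_⟩
    rw [← Module.End.mul_apply, ← pow_succ', ← hk]
    exact Nat.find_spec hX
  have hYZ (n : ℕ) : Z ((Y ^ n) v) = (l + 1 * n) • (Y ^ n) v := by
    induction n with
    | zero => simpa using hvz
    | succ n ih =>
      have := h.yz ((Y ^ n) v)
      rw [ih, map_smul] at this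
      rw [pow_succ', Module.End.mul_apply, sub_eq_iff_eq_add.1 this.symm]
      push_cast
      module
  have hY := exists_eq_zero_of_apply_eq_smul one_ne_zero hYZ
  have hroot : (l - 1/4 - d/2) * (l - 1/4 + d/2) = 0 := by
    have := h.yx v
    rw [hvx, hvz, map_smul, hvz, map_zero] at this
    have h2 : (l * l - 1/2 * l - s) • v = 0 := by rw [this]; module
    have := (smul_eq_zero.1 h2).resolve_right hv
    rw [hs] at this
    linear_combination this
  have hXY (n : ℕ) : X ((Y ^ (n + 1)) v) =
      ((l + n + 1) * (l + n + 1) - 1/2 * (l + n + 1) - s) • (Y ^ n) v := by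
    have e : Y (X ((Y ^ n) v)) = _ := h.yx _
    rw [hYZ, map_smul, hYZ] at e
    rw [pow_succ', Module.End.mul_apply, h.xy, e, hYZ]
    module
  obtain ⟨N, hN0, hN⟩ : ∃ N, (∀ n < N + 1, (Y ^ n) v ≠ 0) ∧ (Y ^ (N + 1)) v = 0 := by
    classical
    obtain ⟨k, hk⟩ : ∃ k, Nat.find hY = k + 1 :=
      Nat.exists_eq_succ_of_ne_zero fun h0 => hv (by simpa [h0] using Nat.find_spec hY)
    exact ⟨k, fun n hn => Nat.find_min hY (by omega), hk ▸ Nat.find_spec hY⟩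
  have hrootN : (l + N + 1 - 1/4 - d/2) * (l + N + 1 - 1/4 + d/2) = 0 := by
    have := hXY N
    rw [hN, map_zero, eq_comm] at this
    have := (smul_eq_zero.1 this).resolve_right (hN0 N (by omega))
    rw [hs] at this
    linear_combination this
  have hl : l = 1/4 - d/2 ∧ N + 1 = d := by
    rcases mul_eq_zero.1 hroot with h1 | h1 <;> rcases mul_eq_zero.1 hrootN with h2 | h2
    · have : ((N + 1 : ℕ) : ℂ) = 0 := by push_cast; linear_combination h2 - h1
      norm_cast at this
    · have : ((N + 1 + d : ℕ) : ℂ) = 0 := by push_cast; linear_combination h2 - h1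
      norm_cast at this
      omega
    · refine ⟨by linear_combination h1, ?_⟩
      have : ((N + 1 : ℕ) : ℂ) = (d : ℕ) := by push_cast; linear_combination h2 - h1
      exact_mod_cast this
    · have : ((N + 1 : ℕ) : ℂ) = 0 := by push_cast; linear_combination h2 - h1
      norm_cast at this
  obtain ⟨rfl, hNd⟩ := hl
  refine ⟨fun n => (Y ^ n) v, ?_, ?_, ?_, ?_, ?_, ?_⟩
  · simpa using hYZ
  · intro n
    rw [pow_succ', Module.End.mul_apply]
  · simpa using hvx
  · intro n
    rw [hXY, hs]
    congr 1
    ring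
  · exact hNd ▸ hN
  · exact Module.End.eigenvectors_linearIndependent' Z
      (fun n : Fin d => (1/4 - d/2 + 1 * (n : ℕ) : ℂ))
      (fun a b hab => by simpa [Fin.val_inj] using hab) _
      (fun n => ⟨Module.End.mem_eigenspace_iff.2 (hYZ n), hN0 n (hNd ▸ n.2)⟩)

theorem IsTString.mem_span {d : ℕ} {W : Type*} [AddCommGroup W] [Module ℂ W]
    {X Y Z : Module.End ℂ W} {b : ℕ → W} (hb : IsTString d X Y Z b) {n : ℕ} (hn : n ≤ d) :
    b n ∈ Submodule.span ℂ (Set.range fun i : Fin d => b i) := by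
  rcases hn.lt_or_eq with hn | rfl
  · exact Submodule.subset_span ⟨⟨n, hn⟩, rfl⟩
  · rw [hb.top]
    exact zero_mem _

theorem IsTString.span_eq_top {s : ℂ} {d d' : ℕ} (hd : 1 ≤ d)
    {ρ : TAlg s →ₐ[ℂ] Module.End ℂ (Fin d' → ℂ)} (hρ : SimpleRep (TAlg s) d' ρ)
    {b : ℕ → Fin d' → ℂ}
    (hb : IsTString d (ρ (TAlg.gen_s11 s 0)) (ρ (TAlg.gen_s11 s 1)) (ρ (TAlg.gen_s11 s 2)) b) :
    Submodule.span ℂ (Set.range fun i : Fin d => b i) = ⊤ := by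
  refine (hρ.2 _ fun a => ?_).resolve_left fun hbot => ?_
  · induction a using TAlg.induction with
    | scalar r =>
      intro v hv
      simpa [Module.algebraMap_end_apply] using Submodule.smul_mem _ r hv
    | add a c ha hc =>
      intro v hv
      simpa using add_mem (ha v hv) (hc v hv)
    | mul a c ha hc =>
      intro v hv
      simpa using ha _ (hc v hv)
    | gen_s11 i =>
      rw [← Module.End.mem_invtSubmodule_iff_forall_mem_of_mem, Module.End.mem_invtSubmodule,
        Submodule.span_le]
      rintro _ ⟨⟨n, hn⟩, rfl⟩
      rw [Submodule.comap_coe, Set.mem_preimage, SetLike.mem_coe]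
      fin_cases i
      · rcases n with _ | n
        · exact hb.x_zero ▸ zero_mem _
        · exact hb.x_succ n ▸ Submodule.smul_mem _ _ (hb.mem_span (by omega))
      · exact hb.y n ▸ hb.mem_span (by omega)
      · exact hb.z n ▸ Submodule.smul_mem _ _ (hb.mem_span (by omega))
  · have h0 := hb.mem_span (Nat.zero_le d)
    rw [hbot, Submodule.mem_bot] at h0
    exact hb.linearIndependent.ne_zero ⟨0, hd⟩ h0

/-- A simple representation has a basis which is a string. -/
theorem SimpleRep.exists_basis {s : ℂ} {d d' : ℕ} (hd : 1 ≤ d)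
    (hs : s = (4 * (d : ℂ) ^ 2 - 1) / 16)
    {ρ : TAlg s →ₐ[ℂ] Module.End ℂ (Fin d' → ℂ)} (hρ : SimpleRep (TAlg s) d' ρ) :
    ∃ (b : ℕ → Fin d' → ℂ) (B : Module.Basis (Fin d) ℂ (Fin d' → ℂ)), (∀ i : Fin d, B i = b i) ∧
      IsTString d (ρ (TAlg.gen_s11 s 0)) (ρ (TAlg.gen_s11 s 1)) (ρ (TAlg.gen_s11 s 2)) b := by
  obtain ⟨v, hv⟩ := hρ.1
  have : Nontrivial (Fin d' → ℂ) := ⟨v, 0, hv⟩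
  obtain ⟨b, hb⟩ := (TTriple.of_algHom ρ).exists_isTString hs
  exact ⟨b, .mk hb.linearIndependent (hb.span_eq_top hd hρ).ge, fun i => by simp, hb⟩

/-- The operator `x` of the standard representation. -/
def stdX (d : ℕ) : Module.End ℂ (Fin d → ℂ) where
  toFun f i := if h : (i : ℕ) + 1 < d then ((i + 1) * (i + 1 - d) : ℂ) * f ⟨i + 1, h⟩ else 0
  map_add' f g := by
    ext i
    by_cases h : (i : ℕ) + 1 < d <;> simp [h, mul_add]
  map_smul' c f := by
    ext i
    by_cases h : (i : ℕ) + 1 < d <;> simp [h, mul_left_comm]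

/-- The operator `y` of the standard representation. -/
def stdY (d : ℕ) : Module.End ℂ (Fin d → ℂ) where
  toFun f i := if (i : ℕ) = 0 then 0 else f ⟨i - 1, by omega⟩
  map_add' f g := by
    ext i
    by_cases h : (i : ℕ) = 0 <;> simp [h]
  map_smul' c f := by
    ext i
    by_cases h : (i : ℕ) = 0 <;> simp [h]

/-- The operator `z` of the standard representation. -/
def stdZ (d : ℕ) : Module.End ℂ (Fin d → ℂ) where
  toFun f i := (1/4 - d/2 + (i : ℕ) : ℂ) * f i
  map_add' f g := by
    ext i
    simp [mul_add]
  map_smul' c f := by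
    ext i
    simp [mul_left_comm]

theorem tTriple_std (d : ℕ) :
    TTriple ((4 * (d : ℂ) ^ 2 - 1) / 16) (stdX d) (stdY d) (stdZ d) := by
  constructor <;> intro f <;> ext ⟨i, hi⟩
  · by_cases h : i + 1 < d
    · rcases i with _ | i
      · simp [stdX, stdY, stdZ, h]
        ring
      · simp [stdX, stdY, stdZ, h, hi]
        ring
    · obtain rfl : d = i + 1 := by omega
      rcases i with _ | i
      · simp [stdX, stdY, stdZ]
        ring
      · simp [stdX, stdY, stdZ]
        ring
  · rcases i with _ | i
    · simp [stdY, stdZ]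
    · simp [stdY, stdZ]
      ring
  · by_cases h : i + 1 < d
    · simp [stdX, stdZ, h]
      ring
    · simp [stdX, stdZ, h]
  · rcases i with _ | i
    · simp [stdY, stdX, stdZ]
      ring
    · simp [stdY, stdX, stdZ, hi]
      ring

theorem simpleRep_std {d : ℕ} (hd : 1 ≤ d) :
    SimpleRep (TAlg ((4 * (d : ℂ) ^ 2 - 1) / 16)) d (tTriple_std d).toAlgHom := by
  have : Nonempty (Fin d) := ⟨⟨0, hd⟩⟩
  refine ⟨exists_ne 0, fun V hV => or_iff_not_imp_left.2 fun hne => ?_⟩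
  have : Nontrivial V := Submodule.nontrivial_iff_ne_bot.2 hne
  have hgen (i : Fin 3) (v) (hv : v ∈ V) : ![stdX d, stdY d, stdZ d] i v ∈ V :=
    (tTriple_std d).toAlgHom_gen i ▸ hV _ v hv
  obtain ⟨b, hb⟩ :=
    ((tTriple_std d).restrict V (hgen 0) (hgen 1) (hgen 2)).exists_isTString rfl
  refine Submodule.eq_top_of_finrank_eq (le_antisymm (Submodule.finrank_le V) ?_)
  simpa using hb.linearIndependent.fintype_card_le_finrank

theorem SimpleRep.exists_equiv {s : ℂ} {d : ℕ} (hd : 1 ≤ d)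
    (hs : s = (4 * (d : ℂ) ^ 2 - 1) / 16) {ρ₁ ρ₂ : TAlg s →ₐ[ℂ] Module.End ℂ (Fin d → ℂ)}
    (h₁ : SimpleRep (TAlg s) d ρ₁) (h₂ : SimpleRep (TAlg s) d ρ₂) :
    ∃ e : (Fin d → ℂ) ≃ₗ[ℂ] (Fin d → ℂ), ∀ a v, e (ρ₁ a v) = ρ₂ a (e v) := by
  obtain ⟨b, B, hB, hb⟩ := h₁.exists_basis hd hs
  obtain ⟨c, C, hC, hc⟩ := h₂.exists_basis hd hs
  refine ⟨B.equiv C (Equiv.refl _), fun a => ?_⟩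
  set e := B.equiv C (Equiv.refl _) with he
  have hbc {n : ℕ} (hn : n ≤ d) : e (b n) = c n := by
    rcases hn.lt_or_eq with hn | rfl
    · rw [← hB ⟨n, hn⟩, ← hC ⟨n, hn⟩, he, Module.Basis.equiv_apply, Equiv.refl_apply]
    · rw [hb.top, hc.top, map_zero]
  induction a using TAlg.induction with
  | scalar r =>
    intro v
    simp [Module.algebraMap_end_apply]
  | add a c ha hc =>
    intro v
    simp [ha, hc]
  | mul a c ha hc =>
    intro v
    simp [ha, hc]
  | gen_s11 i =>
    refine LinearMap.congr_fun (f := e.toLinearMap ∘ₗ ρ₁ (TAlg.gen_s11 s i))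
      (g := ρ₂ (TAlg.gen_s11 s i) ∘ₗ e.toLinearMap) (B.ext ?_)
    rintro ⟨n, hn⟩
    rw [hB]
    change e (ρ₁ (TAlg.gen_s11 s i) (b n)) = ρ₂ (TAlg.gen_s11 s i) (e (b n))
    rw [hbc hn.le]
    fin_cases i
    · rcases n with _ | n
      · exact (congrArg e hb.x_zero).trans ((map_zero e).trans hc.x_zero.symm)
      · refine (congrArg e (hb.x_succ n)).trans (Eq.trans ?_ (hc.x_succ n).symm)
        rw [map_smul, hbc (by omega)]
    · exact (congrArg e (hb.y n)).trans ((hbc hn).trans (hc.y n).symm)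
    · refine (congrArg e (hb.z n)).trans (Eq.trans ?_ (hc.z n).symm)
      rw [map_smul, hbc hn.le]

/-- For `σ = (4d² − 1)/16` with `d ≥ 1`, the algebra `T_{σ,1}` has,
up to isomorphism, a unique finite-dimensional simple module, and its dimension is `d`. -/
theorem stmt11 (d : ℕ) (hd : 1 ≤ d) :
    let s : ℂ := (4 * (d : ℂ) ^ 2 - 1) / 16
    (∃ ρ : TAlg s →ₐ[ℂ] Module.End ℂ (Fin d → ℂ), SimpleRep (TAlg s) d ρ) ∧
    (∀ (d' : ℕ) (ρ' : TAlg s →ₐ[ℂ] Module.End ℂ (Fin d' → ℂ)),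
      SimpleRep (TAlg s) d' ρ' → d' = d) ∧
    (∀ ρ₁ ρ₂ : TAlg s →ₐ[ℂ] Module.End ℂ (Fin d → ℂ),
      SimpleRep (TAlg s) d ρ₁ → SimpleRep (TAlg s) d ρ₂ →
      ∃ e : (Fin d → ℂ) ≃ₗ[ℂ] (Fin d → ℂ),
        ∀ (a : TAlg s) (v : Fin d → ℂ), e (ρ₁ a v) = ρ₂ a (e v)) := by
  intro s
  refine ⟨⟨_, simpleRep_std hd⟩, fun d' ρ' hρ' => ?_,
    fun ρ₁ ρ₂ h₁ h₂ => h₁.exists_equiv hd rfl h₂⟩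
  obtain ⟨-, B, -⟩ := hρ'.exists_basis hd rfl
  simpa using Module.finrank_eq_card_basis B


end
end
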